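/- Walk-to-path lemma in the lifted dependency graph: let G = (V, E_d, E_bi) be a DMG with lifted dependency graph G̃, let a, b ∈ V and C ⊆ V \ {a}. If there exists a walk from a_0 to b_1 in G̃ that is σ-open given C_0 ∪ (C_1 \ {b_1}), then there exists a path from a_0 to b_1 in G̃ that is σ-open given C_0 ∪ (C_1 \ {b_1}) and consists only of edges occurring on the given walk. -/

import Mathlib

namespace ESepPaper

/-- A directed mixed graph: directed edges and bidirected edges over a node type `V`.
A directed graph (DG) is a DMG with `Ebi = ∅`. -/
structure DMG (V : Type) where
  Ed : Set (V × V)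
  Ebi : Set (Sym2 V)

variable {V : Type}

/-- `G.ancestor u v` : there is a directed path `u → … → v` (possibly trivial). -/
def DMG.ancestor (G : DMG V) : V → V → Prop :=
  Relation.ReflTransGen (fun u v => (u, v) ∈ G.Ed)

/-- Ancestors of a set `C`. -/
def DMG.anc (G : DMG V) (C : Set V) : Set V := {u | ∃ v ∈ C, G.ancestor u v}

/-- Strongly connected component of `v`. -/
def DMG.scc (G : DMG V) (v : V) : Set V := {w | G.ancestor w v ∧ G.ancestor v w}

/-- Parents of a set of nodes. -/
def DMG.pa (G : DMG V) (S : Set V) : Set V := {w | ∃ v ∈ S, (w, v) ∈ G.Ed}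

/-- Kind of a traversed edge on a walk: forward directed, backward directed, or bidirected. -/
inductive LinkType | fwd | bwd | bi
deriving DecidableEq

/-- Validity of a link of kind `t` between consecutive walk nodes `u` and `v`. -/
def DMG.linkOK (G : DMG V) (u v : V) : LinkType → Prop
  | .fwd => (u, v) ∈ G.Ed
  | .bwd => (v, u) ∈ G.Ed
  | .bi => s(u, v) ∈ G.Ebi

/-- Arrowhead at the second (right) endpoint of the link. -/
def LinkType.headR : LinkType → Prop
  | .fwd => True
  | .bwd => False
  | .bi => True

/-- Arrowhead at the first (left) endpoint of the link. -/
def LinkType.headL : LinkType → Prop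
  | .fwd => False
  | .bwd => True
  | .bi => True

/-- Tail at the second (right) endpoint. -/
def LinkType.tailR (t : LinkType) : Prop := t = .bwd

/-- Tail at the first (left) endpoint. -/
def LinkType.tailL (t : LinkType) : Prop := t = .fwd

/-- Walks in a DMG. -/
inductive DMG.Walk (G : DMG V) : V → V → Type
  | nil (v : V) : DMG.Walk G v v
  | cons {u v w : V} (t : LinkType) (h : G.linkOK u v t) (p : DMG.Walk G v w) : DMG.Walk G u w

/-- An interior node on a walk, whose incoming link is `t1` and outgoing link is `t2`,
is a collider iff both links have an arrowhead at it. -/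
def colliderAt (t1 t2 : LinkType) : Prop := t1.headR ∧ t2.headL

/-- An interior non-collider `v` between neighbours `u` (incoming link `t1`) and `w`
(outgoing link `t2`) is unblockable: on every side where the link has a tail at `v`, the
corresponding neighbour lies in `scc_G(v)` (left-chain/right-chain/fork cases). -/
def unblockableAt (G : DMG V) (u v w : V) (t1 t2 : LinkType) : Prop :=
  (t1.tailR → u ∈ G.scc v) ∧ (t2.tailL → w ∈ G.scc v)

namespace DMG.Walk

variable {G : DMG V}

/-- First node of a walk. -/
def first {a b : V} (_ : G.Walk a b) : V := a

def length : {a b : V} → G.Walk a b → ℕ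
  | _, _, .nil _ => 0
  | _, _, .cons _ _ p => p.length + 1

def support : {a b : V} → G.Walk a b → List V
  | a, _, .nil _ => [a]
  | a, _, .cons _ _ p => a :: p.support

/-- Auxiliary: σ-openness of the remainder of a walk, where `u` is the previous node and
`t1` the link from `u` into the current first node. -/
def sigmaOpenAux (C : Set V) : (u : V) → LinkType → {b c : V} → G.Walk b c → Prop
  | _, _, _, _, .nil _ => True
  | u, t1, v, _, .cons t2 _ q =>
      ((colliderAt t1 t2 → v ∈ G.anc C) ∧
       (¬ colliderAt t1 t2 → ¬ unblockableAt G u v q.first t1 t2 → v ∉ C)) ∧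
      sigmaOpenAux C v t2 q

/-- The walk is σ-open given `C`: every collider on it is an ancestor of a node of `C`, and
no blockable non-collider on it lies in `C`. -/
def sigmaOpen (C : Set V) : {a b : V} → G.Walk a b → Prop
  | _, _, .nil _ => True
  | a, _, .cons t _ q => sigmaOpenAux C a t q

/-- All links are forward directed. -/
def IsDirected : {a b : V} → G.Walk a b → Prop
  | _, _, .nil _ => True
  | _, _, .cons t _ p => t = .fwd ∧ p.IsDirected

/-- Interior nodes of the walk (all nodes except the two endpoints). -/
def interior {a b : V} (p : G.Walk a b) : List V := p.support.tail.dropLast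

/-- Arrowhead at the first endpoint. -/
def headAtStart : {a b : V} → G.Walk a b → Prop
  | _, _, .nil _ => False
  | _, _, .cons t _ _ => t.headL

def headAtEndAux : LinkType → {a b : V} → G.Walk a b → Prop
  | t, _, _, .nil _ => t.headR
  | _, _, _, .cons t _ q => headAtEndAux t q

/-- Arrowhead at the last endpoint. -/
def headAtEnd : {a b : V} → G.Walk a b → Prop
  | _, _, .nil _ => False
  | _, _, .cons t _ q => headAtEndAux t q

def noCollidersAux : LinkType → {a b : V} → G.Walk a b → Prop
  | _, _, _, .nil _ => True
  | t1, _, _, .cons t2 _ q => ¬ colliderAt t1 t2 ∧ noCollidersAux t2 q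

/-- There is no collider on the walk. -/
def NoColliders : {a b : V} → G.Walk a b → Prop
  | _, _, .nil _ => True
  | _, _, .cons t _ q => noCollidersAux t q

def collidersInAux (S : Set V) : LinkType → {a b : V} → G.Walk a b → Prop
  | _, _, _, .nil _ => True
  | t1, v, _, .cons t2 _ q => (colliderAt t1 t2 → v ∈ S) ∧ collidersInAux S t2 q

/-- Every collider on the walk lies in `S`. -/
def CollidersIn (S : Set V) : {a b : V} → G.Walk a b → Prop
  | _, _, .nil _ => True
  | _, _, .cons t _ q => collidersInAux S t q

def noncollUnblAux : (u : V) → LinkType → {b c : V} → G.Walk b c → Prop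
  | _, _, _, _, .nil _ => True
  | u, t1, v, _, .cons t2 _ q =>
      (¬ colliderAt t1 t2 → unblockableAt G u v q.first t1 t2) ∧ noncollUnblAux v t2 q

/-- Every interior non-collider on the walk is unblockable. -/
def NoncollidersUnblockable : {a b : V} → G.Walk a b → Prop
  | _, _, .nil _ => True
  | a, _, .cons t _ q => noncollUnblAux a t q

/-- The set of edges occurring on a walk (directed edges as ordered pairs in `E_d`,
bidirected edges as unordered pairs). -/
def edges : {a b : V} → G.Walk a b → Set ((V × V) ⊕ Sym2 V)
  | _, _, .nil _ => ∅
  | a, _, .cons t _ p =>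
      insert (match t with
        | .fwd => Sum.inl (a, p.first)
        | .bwd => Sum.inl (p.first, a)
        | .bi => Sum.inr s(a, p.first)) p.edges

/-- Concatenation of walks. -/
def append : {a b c : V} → G.Walk a b → G.Walk b c → G.Walk a c
  | _, _, _, .nil _, q => q
  | _, _, _, .cons t h p, q => .cons t h (p.append q)

/-- A walk `v_0, …, v_{n+1}` is a path if no node besides the final endpoint occurs more
than once, i.e. `v_0, …, v_n` are pairwise distinct. -/
def IsPath {a b : V} (p : G.Walk a b) : Prop := p.support.dropLast.Nodup

end DMG.Walk

/-- `A` is σ-separated from `B` given `C` in `G`: every walk from a node of `A` to a node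
of `B` is σ-blocked given `C`. -/
def DMG.sigmaSep (G : DMG V) (A B C : Set V) : Prop :=
  ∀ a ∈ A, ∀ b ∈ B, ∀ p : G.Walk a b, ¬ p.sigmaOpen C

/-- The lifted dependency graph of `G`, on two copies of `V`
(`Sum.inl` is the past copy `V_0`, `Sum.inr` the future copy `V_1`). -/
def DMG.lift (G : DMG V) : DMG (V ⊕ V) where
  Ed := {e | ∃ u v, (u, v) ∈ G.Ed ∧
        (e = (Sum.inl u, Sum.inl v) ∨ e = (Sum.inl u, Sum.inr v) ∨
         e = (Sum.inr u, Sum.inr v))}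
  Ebi := {e | ∃ u v, s(u, v) ∈ G.Ebi ∧
        (e = s(Sum.inl u, Sum.inl v) ∨ e = s(Sum.inl u, Sum.inr v) ∨
         e = s(Sum.inr u, Sum.inl v) ∨ e = s(Sum.inr u, Sum.inr v))}

/-- `B` is E-separated from `A` given `C` in `G`:
`A_0` is σ-separated from `B_1` given `C_0 ∪ (C_1 \ B_1)` in the lifted dependency graph. -/
def DMG.ESep (G : DMG V) (A B C : Set V) : Prop :=
  G.lift.sigmaSep (Sum.inl '' A) (Sum.inr '' B)
    ((Sum.inl '' C) ∪ ((Sum.inr '' C) \ (Sum.inr '' B)))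

/-- The independence model `I_E^G` of E-separation triples. -/
def DMG.IE (G : DMG V) : Set (Set V × Set V × Set V) :=
  {t | G.ESep t.1 t.2.1 t.2.2}


/-- The latent projection of `G` onto the observed nodes `O`: a directed edge when there is
a non-trivial directed walk whose interior nodes are all latent, and a bidirected edge when
there is a non-trivial collider-free walk with arrowheads at both endpoints whose interior
nodes are all latent. -/
def DMG.latentProj (G : DMG V) (O : Set V) : DMG O where
  Ed := {e | ∃ p : G.Walk e.1.val e.2.val,
          p.IsDirected ∧ 0 < p.length ∧ ∀ x ∈ p.interior, x ∉ O}
  Ebi := {e | ∃ u v : O, e = s(u, v) ∧ ∃ p : G.Walk u.val v.val,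
          p.headAtStart ∧ p.headAtEnd ∧ p.NoColliders ∧ 0 < p.length ∧
          ∀ x ∈ p.interior, x ∉ O}

/-- The last edge of the walk `p` before entering `scc_G(w)` has an arrowhead at its
endpoint in `scc_G(w)` (vacuous if the walk never leaves `scc_G(w)`). -/
def DMG.lastEdgeInto (G : DMG V) {a b : V} (w : V) (p : G.Walk a b) : Prop :=
  (∀ x ∈ p.support, x ∈ G.scc w) ∨
  ∃ (x y : V) (t : LinkType) (h : G.linkOK x y t) (p₁ : G.Walk a x) (p₂ : G.Walk y b),
    p = p₁.append (.cons t h p₂) ∧ x ∉ G.scc w ∧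
    (∀ z ∈ p₂.support, z ∈ G.scc w) ∧ t.headR

/-- An (asymmetric) inducing path from `v` to `w`: a non-trivial path such that every
collider on it is an ancestor of `v` or `w`, every interior non-collider is unblockable,
and the last edge before entering `scc_G(w)` points into `scc_G(w)`. -/
def DMG.IsInducingPath (G : DMG V) {v w : V} (p : G.Walk v w) : Prop :=
  0 < p.length ∧ p.IsPath ∧
  p.CollidersIn (G.anc {v, w}) ∧ p.NoncollidersUnblockable ∧ G.lastEdgeInto w p

theorem anc_step {V : Type} {G : DMG V} {C : Set V} {u v : V} (h : (u, v) ∈ G.Ed)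
    (hv : v ∈ G.anc C) : u ∈ G.anc C := by
  obtain ⟨c, hc, h'⟩ := hv
  exact ⟨c, hc, Relation.ReflTransGen.head h h'⟩

theorem drop_lemma {V : Type} {G : DMG V} (C : Set V) (v : V) :
    ∀ {w b : V} (r : G.Walk w b) (x0 : V) (t0 : LinkType),
      r.sigmaOpenAux C x0 t0 → v ∈ r.support → r.support.Nodup →
      ∃ (s : G.Walk v b) (x : V) (t : LinkType), s.sigmaOpenAux C x t ∧ s.support.Nodup ∧
        s.edges ⊆ r.edges ∧ (t0.headR → t.headR ∨ w ∈ G.anc C) := by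
  intro w b r
  induction r with
  | nil w =>
    intro x0 t0 ho hv hn
    have : v = w := by simpa [DMG.Walk.support] using hv
    subst this
    exact ⟨.nil v, x0, t0, ho, hn, subset_rfl, Or.inl⟩
  | @cons w w' b t2 h r ih =>
    intro x0 t0 ho hv hn
    by_cases hvw : v = w
    · subst hvw
      exact ⟨.cons t2 h r, x0, t0, ho, hn, subset_rfl, Or.inl⟩
    · have hv' : v ∈ r.support := by
        simpa [DMG.Walk.support, hvw] using hv
      have hn' : r.support.Nodup := by
        simp only [DMG.Walk.support, List.nodup_cons] at hn
        exact hn.2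
      simp only [DMG.Walk.sigmaOpenAux] at ho
      obtain ⟨s, x, t, h1, h2, h3, h4⟩ := ih w t2 ho.2 hv' hn'
      refine ⟨s, x, t, h1, h2, h3.trans (Set.subset_insert _ _), fun h0 => ?_⟩
      by_cases hl : t2.headL
      · exact Or.inr (ho.1.1 ⟨h0, hl⟩)
      · cases t2 with
        | fwd => exact (h4 trivial).imp_right (anc_step h)
        | bwd => exact absurd trivial hl
        | bi => exact absurd trivial hl

theorem aux_path {V : Type} {G : DMG V} (C : Set V) :
    ∀ {v b : V} (q : G.Walk v b) (u : V) (t1 : LinkType), q.sigmaOpenAux C u t1 →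
      ∃ q' : G.Walk v b, q'.sigmaOpenAux C u t1 ∧ q'.support.Nodup ∧ q'.edges ⊆ q.edges := by
  intro v b q
  induction q with
  | nil v =>
    intro u t1 ho
    exact ⟨.nil v, ho, by simp [DMG.Walk.support], subset_rfl⟩
  | @cons v w b t2 h r ih =>
    intro u t1 ho
    simp only [DMG.Walk.sigmaOpenAux] at ho
    obtain ⟨⟨hc, hnc⟩, ho2⟩ := ho
    obtain ⟨r', h1, h2, h3⟩ := ih v t2 ho2
    by_cases hv : v ∈ r'.support
    · obtain ⟨s, x, t, g1, g2, g3, g4⟩ := drop_lemma C v r' v t2 h1 hv h2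
      refine ⟨s, ?_, g2, (g3.trans h3).trans (Set.subset_insert _ _)⟩
      cases s with
      | nil => trivial
      | cons t3 h' s =>
        simp only [DMG.Walk.sigmaOpenAux] at g1 ⊢
        obtain ⟨⟨gc, gnc⟩, go⟩ := g1
        refine ⟨⟨fun ⟨k1, k3⟩ => ?_, fun hncol hbl hvC => ?_⟩, go⟩
        · by_cases hl : t2.headL
          · exact hc ⟨k1, hl⟩
          · cases t2 with
            | fwd =>
              rcases g4 trivial with k | k
              · exact gc ⟨k, k3⟩
              · exact anc_step h k
            | bwd => exact absurd trivial hl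
            | bi => exact absurd trivial hl
        · apply hbl
          constructor
          · intro k
            by_contra hu
            refine hnc ?_ (fun z => hu (z.1 k)) hvC
            rintro ⟨z, -⟩
            rw [LinkType.tailR] at k
            subst k
            exact z
          · intro k
            by_contra hu
            refine gnc ?_ (fun z => hu (z.2 k)) hvC
            rintro ⟨-, z⟩
            rw [LinkType.tailL] at k
            subst k
            exact z
    · refine ⟨.cons t2 h r', ⟨⟨hc, hnc⟩, h1⟩, ?_, Set.insert_subset_insert h3⟩
      simp only [DMG.Walk.support, List.nodup_cons]
      exact ⟨hv, h2⟩

theorem open_path {V : Type} {G : DMG V} (C : Set V) {a b : V} (p : G.Walk a b)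
    (hp : p.sigmaOpen C) :
    ∃ q : G.Walk a b, q.sigmaOpen C ∧ q.support.Nodup ∧ q.edges ⊆ p.edges := by
  cases p with
  | nil => exact ⟨.nil _, trivial, by simp [DMG.Walk.support], subset_rfl⟩
  | cons t h r =>
    obtain ⟨r', h1, h2, h3⟩ := aux_path C r a t hp
    by_cases hv : a ∈ r'.support
    · obtain ⟨s, x, t', g1, g2, g3, -⟩ := drop_lemma C a r' a t h1 hv h2
      refine ⟨s, ?_, g2, (g3.trans h3).trans (Set.subset_insert _ _)⟩
      cases s with
      | nil => trivial
      | cons t3 h' s => exact g1.2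
    · refine ⟨.cons t h r', h1, ?_, Set.insert_subset_insert h3⟩
      simp only [DMG.Walk.support, List.nodup_cons]
      exact ⟨hv, h2⟩

/-- Walk-to-path lemma in the lifted dependency graph: a σ-open walk from `a₀` to `b₁`
given `C₀ ∪ (C₁ \ {b₁})` can be turned into a σ-open path consisting of edges of the
original walk. -/
theorem walk_to_path {V : Type} [Fintype V] (G : DMG V) (a b : V) (C : Set V)
    (hC : a ∉ C)
    (p : G.lift.Walk (Sum.inl a) (Sum.inr b))
    (hp : p.sigmaOpen ((Sum.inl '' C) ∪ ((Sum.inr '' C) \ {Sum.inr b}))) :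
    ∃ q : G.lift.Walk (Sum.inl a) (Sum.inr b),
      q.sigmaOpen ((Sum.inl '' C) ∪ ((Sum.inr '' C) \ {Sum.inr b})) ∧
      q.IsPath ∧ q.edges ⊆ p.edges := by
  obtain ⟨q, h1, h2, h3⟩ := open_path _ p hp
  exact ⟨q, h1, h2.sublist (List.dropLast_sublist _), h3⟩

end ESepPaper
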